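/- arXiv:1104.1884 — 6 statements merged into one kernel-verified Lean document; each statement's English description precedes it below -/
import Mathlib

section
/- Let f : ℕ → (0,∞) be non-decreasing with f(n) → ∞, and suppose there exists K > 0 such that f(x+y) ≤ K·f(x)·f(y) for all positive integers x, y, and that limsup_{n→∞} (1/n)·log f(n) = 0. Let an irreducible recurrent discrete-time Markov chain on a finite or countable state space be given. If E f(T_ii) < ∞ for a state i, then E f(T_ij) < ∞ for every state j. -/
/-!
Let `μ` be the law of the return time to `i` on the event that `j` is avoided, and `ν` the law of
the hitting time of `j` on the event that `i` is avoided. Decomposing at the first visit to `{i, j}`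
(`firstHit_decomp`), the law `H` of `T_ij` solves the renewal equation `H = ν + μ * H`, while
`μ + ν * (law of T_ji)` is the law of `T_ii`. By irreducibility the second identity gives
`∑ μ < 1`, `∑ f μ < ∞` and `∑ f ν < ∞`, so the claim reduces to a statement on renewal equations
(`renewal_moment_lt_top`).

Submultiplicativity alone is not enough there, since it only bounds the `f`-moment of the `n`-fold
convolution of `μ` by `(K ∑ f μ) ^ n`. Instead `f` is replaced by the larger function
`v x = sup_k f (x + k) a⁻ᵏ` with `a > 1`, finite because `f` is subexponential. It satisfies both
`v (x + y) ≤ a ^ y v x` and `v (x + y) ≤ K f y v x`. Using the first bound for `y < M` and the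
second for `y ≥ M` yields `∑_y μ y v (x + y) ≤ r v x` with `r = a ^ M ∑ μ + K ∑_{y ≥ M} f y μ y`,
and `r < 1` when first `M` is chosen large and then `a` close to `1`. Summing the renewal equation
against `v` gives `W ≤ C + r W` for the truncated moments `W`, hence a uniform bound on them.
-/

open Filter
open scoped ENNReal

namespace MCPaper

variable {E : Type*}

open Classical in
/-- `hitAvoid P t a n x` is the probability that the chain with transition matrix `P`,
started at `x`, is at `t` at time `n` while avoiding both `t` and `a` at times `1,…,n-1`.
For `t = a` this is the distribution of the first hitting time of `t`. -/
noncomputable def hitAvoid (P : E → E → ℝ≥0∞) (t a : E) : ℕ → E → ℝ≥0∞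
  | 0, _ => 0
  | 1, x => P x t
  | n + 2, x => ∑' k : E, if k = t ∨ k = a then 0 else P x k * hitAvoid P t a (n + 1) k

/-- `firstHit P i j n = P_i(T_ij = n)`, the probability that the first hitting time of `j`
(first return time if `i = j`) starting from `i` equals `n`. -/
noncomputable def firstHit (P : E → E → ℝ≥0∞) (i j : E) (n : ℕ) : ℝ≥0∞ :=
  hitAvoid P j j n i

/-- `P` is a stochastic matrix. -/
def IsStochastic (P : E → E → ℝ≥0∞) : Prop := ∀ i, ∑' j : E, P i j = 1

/-- irreducibility: any state can be reached from any other state. -/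
def IsIrreducible (P : E → E → ℝ≥0∞) : Prop := ∀ i j : E, ∃ n : ℕ, 0 < firstHit P i j n

/-- recurrence: `P_i(T_ii < ∞) = 1` for every state `i`. -/
def IsRecurrent (P : E → E → ℝ≥0∞) : Prop := ∀ i : E, ∑' n : ℕ, firstHit P i i n = 1

/-- the generalized moment `E f(T_ij)` of the first hitting time of `j` from `i`. -/
noncomputable def momGen (f : ℕ → ℝ) (P : E → E → ℝ≥0∞) (i j : E) : ℝ≥0∞ :=
  ∑' n : ℕ, ENNReal.ofReal (f n) * firstHit P i j n

/-! ### Renewal equations with submultiplicative weights -/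

/-- The weight `v x = sup_k F (x + k) a⁻ᵏ`, a majorant of `F` growing at most geometrically with
ratio `a`. -/
noncomputable def smoothed (F : ℕ → ℝ≥0∞) (a : ℝ≥0∞) (x : ℕ) : ℝ≥0∞ :=
  ⨆ k : ℕ, F (x + k) * a⁻¹ ^ k

lemma le_smoothed (F : ℕ → ℝ≥0∞) (a : ℝ≥0∞) (x : ℕ) : F x ≤ smoothed F a x :=
  le_iSup_of_le 0 (by simp)

lemma smoothed_add_le_pow (F : ℕ → ℝ≥0∞) {a : ℝ≥0∞} (ha0 : a ≠ 0) (ha : a ≠ ⊤) (x y : ℕ) :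
    smoothed F a (x + y) ≤ a ^ y * smoothed F a x := by
  refine iSup_le fun k => ?_
  have h : F (x + y + k) * a⁻¹ ^ k = a ^ y * (F (x + (y + k)) * a⁻¹ ^ (y + k)) := by
    have h1 : a ^ y * a⁻¹ ^ y = 1 := by
      rw [← mul_pow, ENNReal.mul_inv_cancel ha0 ha, one_pow]
    calc F (x + y + k) * a⁻¹ ^ k = (a ^ y * a⁻¹ ^ y) * (F (x + y + k) * a⁻¹ ^ k) := by
          rw [h1, one_mul]
      _ = _ := by rw [pow_add, add_assoc]; ring
  rw [h]
  gcongr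
  exact le_iSup (fun k => F (x + k) * a⁻¹ ^ k) (y + k)

lemma smoothed_add_le_mul {F : ℕ → ℝ≥0∞} {K : ℝ≥0∞}
    (hsub : ∀ x y : ℕ, 0 < x → 0 < y → F (x + y) ≤ K * F x * F y) (a : ℝ≥0∞) {x y : ℕ}
    (hx : 0 < x) (hy : 0 < y) :
    smoothed F a (x + y) ≤ K * F y * smoothed F a x := by
  refine iSup_le fun k => ?_
  calc F (x + y + k) * a⁻¹ ^ k = F (y + (x + k)) * a⁻¹ ^ k := by
        rw [show x + y + k = y + (x + k) by ring]
    _ ≤ (K * F y * F (x + k)) * a⁻¹ ^ k := by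
        gcongr
        exact hsub _ _ hy (by omega)
    _ = K * F y * (F (x + k) * a⁻¹ ^ k) := by ring
    _ ≤ _ := by
        gcongr
        exact le_iSup (fun k => F (x + k) * a⁻¹ ^ k) k

lemma smoothed_lt_top {F : ℕ → ℝ≥0∞} (hF : ∀ n, F n ≠ ⊤) {a : ℝ≥0∞} (ha1 : 1 < a) (ha : a ≠ ⊤)
    (hgrow : ∀ᶠ n in atTop, F n ≤ a ^ n) (x : ℕ) : smoothed F a x < ⊤ := by
  obtain ⟨N, hN⟩ := eventually_atTop.1 hgrow
  have ha0 : a ≠ 0 := (zero_lt_one.trans ha1).ne'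
  have hb : a⁻¹ ≤ 1 := ENNReal.inv_le_one.2 ha1.le
  have hle : smoothed F a x ≤ (∑ k ∈ Finset.range N, F (x + k)) + a ^ x := by
    refine iSup_le fun k => ?_
    rcases lt_or_ge k N with hk | hk
    · calc F (x + k) * a⁻¹ ^ k ≤ F (x + k) * 1 := by
            gcongr
            exact pow_le_one₀ zero_le hb
        _ = F (x + k) := mul_one _
        _ ≤ ∑ k ∈ Finset.range N, F (x + k) :=
            Finset.single_le_sum (f := fun k => F (x + k)) (fun _ _ => zero_le)
              (Finset.mem_range.2 hk)
        _ ≤ _ := le_self_add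
    · calc F (x + k) * a⁻¹ ^ k ≤ a ^ (x + k) * a⁻¹ ^ k := by
            gcongr
            exact hN _ (by omega)
        _ = a ^ x := by
            rw [pow_add, mul_assoc, ← mul_pow, ENNReal.mul_inv_cancel ha0 ha, one_pow, mul_one]
        _ ≤ _ := le_add_self
  refine hle.trans_lt (ENNReal.add_lt_top.2 ⟨?_, ?_⟩)
  · exact ENNReal.sum_lt_top.2 fun k _ => (hF _).lt_top
  · exact ENNReal.pow_lt_top ha.lt_top

/-- The contraction estimate `∑_y μ y v (x + y) ≤ r v x` with `r < 1`, for a suitable ratio `a` in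
the definition of `v`. -/
lemma exists_contraction {F μ : ℕ → ℝ≥0∞} {K : ℝ≥0∞} (hK : K ≠ ⊤)
    (hsub : ∀ x y : ℕ, 0 < x → 0 < y → F (x + y) ≤ K * F x * F y)
    (hμ0 : μ 0 = 0) (hμ1 : ∑' n, μ n < 1) (hμF : ∑' n, F n * μ n < ⊤) :
    ∃ a r : ℝ≥0∞, 1 < a ∧ a ≠ ⊤ ∧ r < 1 ∧
      ∀ x, 0 < x → ∑' y, μ y * smoothed F a (x + y) ≤ r * smoothed F a x := by
  set q := ∑' n, μ n with hq
  -- Choose the threshold `M`, making the tail contribution small.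
  obtain ⟨M, hM⟩ : ∃ M : ℕ, q + K * ∑' y, F (y + M) * μ (y + M) < 1 := by
    have h1 := ENNReal.tendsto_sum_nat_add (fun n => F n * μ n) hμF.ne
    have h2 : Tendsto (fun M => q + K * ∑' y, F (y + M) * μ (y + M)) atTop (nhds (q + K * 0)) :=
      tendsto_const_nhds.add (ENNReal.Tendsto.const_mul h1 (Or.inr hK))
    rw [mul_zero, add_zero] at h2
    exact (h2.eventually (gt_mem_nhds hμ1)).exists
  set t := K * ∑' y, F (y + M) * μ (y + M) with ht
  -- With `M` fixed, take `a` close enough to `1`.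
  obtain ⟨a, ha1, ha2, har⟩ : ∃ a : ℝ≥0∞, 1 < a ∧ a < 2 ∧ q * a ^ M + t < 1 := by
    have h1 : Tendsto (fun a : ℝ≥0∞ => q * a ^ M + t) (nhds 1) (nhds (q * 1 ^ M + t)) := by
      refine Tendsto.add (ENNReal.Tendsto.const_mul ?_ (Or.inl (by simp))) tendsto_const_nhds
      exact (ENNReal.continuous_pow M).tendsto 1
    rw [one_pow, mul_one] at h1
    have h2 := (h1.eventually (gt_mem_nhds hM)).and
      (gt_mem_nhds (show (1 : ℝ≥0∞) < 2 by norm_num))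
    have h3 : ∃ᶠ a in nhds (1 : ℝ≥0∞), 1 < a :=
      frequently_gt_nhds 1
    obtain ⟨a, ha, hb, hc⟩ := (h3.and_eventually h2).exists
    exact ⟨a, ha, hc, hb⟩
  have hat : a ≠ ⊤ := (ha2.trans (by norm_num)).ne
  have ha0 : a ≠ 0 := (zero_lt_one.trans ha1).ne'
  refine ⟨a, q * a ^ M + t, ha1, hat, har, fun x hx => ?_⟩
  set v := smoothed F a with hv
  rw [← ENNReal.summable.sum_add_tsum_nat_add' (f := fun y => μ y * v (x + y)) (k := M), add_mul]
  refine add_le_add ?_ ?_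
  · calc ∑ y ∈ Finset.range M, μ y * v (x + y)
        ≤ ∑ y ∈ Finset.range M, μ y * (a ^ M * v x) := by
          refine Finset.sum_le_sum fun y hy => ?_
          gcongr
          refine (smoothed_add_le_pow F ha0 hat x y).trans ?_
          gcongr
          · exact ha1.le
          · exact (Finset.mem_range.1 hy).le
      _ = (∑ y ∈ Finset.range M, μ y) * (a ^ M * v x) := by rw [Finset.sum_mul]
      _ ≤ q * (a ^ M * v x) := by
          gcongr
          exact ENNReal.sum_le_tsum _
      _ = q * a ^ M * v x := by ring
  · calc ∑' y, μ (y + M) * v (x + (y + M))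
        ≤ ∑' y, K * (F (y + M) * μ (y + M)) * v x := by
          refine ENNReal.tsum_le_tsum fun y => ?_
          rcases Nat.eq_zero_or_pos (y + M) with h0 | h0
          · simp [h0, hμ0]
          · calc μ (y + M) * v (x + (y + M)) ≤ μ (y + M) * (K * F (y + M) * v x) := by
                  gcongr
                  exact smoothed_add_le_mul hsub a hx h0
              _ = _ := by ring
      _ = t * v x := by rw [ENNReal.tsum_mul_right, ENNReal.tsum_mul_left]

/-- Summation over `antidiagonal n`, `n < N`, is dominated by a sum over `ℕ × [0, N)`. -/
lemma sum_antidiagonal_le (G : ℕ → ℕ → ℝ≥0∞) (N : ℕ) :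
    ∑ n ∈ Finset.range N, ∑ p ∈ Finset.HasAntidiagonal.antidiagonal n, G p.1 p.2 ≤
      ∑ l ∈ Finset.range N, ∑' m, G m l := by
  calc ∑ n ∈ Finset.range N, ∑ p ∈ Finset.HasAntidiagonal.antidiagonal n, G p.1 p.2
      = ∑ p ∈ (Finset.range N).sigma fun n => Finset.HasAntidiagonal.antidiagonal n, G p.2.1 p.2.2 := by
        rw [Finset.sum_sigma]
    _ = ∑ p ∈ ((Finset.range N).sigma fun n => Finset.HasAntidiagonal.antidiagonal n).image
          (fun p => p.2), G p.1 p.2 := by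
        rw [Finset.sum_image]
        rintro ⟨n, p⟩ hp ⟨n', p'⟩ hp' h
        simp only [Finset.coe_sigma, Set.mem_sigma_iff, Finset.mem_coe,
          Finset.HasAntidiagonal.mem_antidiagonal] at hp hp' h
        subst h
        obtain rfl : n = n' := hp.2.symm.trans hp'.2
        rfl
    _ ≤ ∑ p ∈ Finset.range N ×ˢ Finset.range N, G p.1 p.2 := by
        refine Finset.sum_le_sum_of_subset ?_
        intro p hp
        simp only [Finset.mem_image, Finset.mem_sigma, Finset.mem_range,
          Finset.HasAntidiagonal.mem_antidiagonal] at hp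
        obtain ⟨⟨n, p'⟩, ⟨h1, h2⟩, rfl⟩ := hp
        simp only [Finset.mem_product, Finset.mem_range]
        dsimp only at h1 h2 ⊢
        omega
    _ = ∑ l ∈ Finset.range N, ∑ m ∈ Finset.range N, G m l := Finset.sum_product_right _ _ _
    _ ≤ _ := Finset.sum_le_sum fun l _ => ENNReal.sum_le_tsum _

/-- A solution `H` of the renewal equation `H = ν + μ * H` with `∑ μ < 1` has finite `F`-moment as
soon as `μ` and `ν` do, for `F` finite, nondecreasing, submultiplicative
up to the constant `K`, and subexponential. -/
lemma renewal_moment_lt_top {F μ ν H : ℕ → ℝ≥0∞} {K : ℝ≥0∞} (hK : K ≠ ⊤) (hF : ∀ n, F n ≠ ⊤)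
    (hmono : Monotone F)
    (hsub : ∀ x y : ℕ, 0 < x → 0 < y → F (x + y) ≤ K * F x * F y)
    (hgrow : ∀ a : ℝ≥0∞, 1 < a → a ≠ ⊤ → ∀ᶠ n in atTop, F n ≤ a ^ n)
    (hμ0 : μ 0 = 0) (hμ1 : ∑' n, μ n < 1) (hμF : ∑' n, F n * μ n < ⊤)
    (hν0 : ν 0 = 0) (hνF : ∑' n, F n * ν n < ⊤) (hH : ∀ n, H n ≠ ⊤)
    (hren : ∀ n, H n = ν n + ∑ p ∈ Finset.HasAntidiagonal.antidiagonal n, μ p.1 * H p.2) :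
    ∑' n, F n * H n < ⊤ := by
  obtain ⟨a, r, ha1, ha, hr, hcon⟩ := exists_contraction hK hsub hμ0 hμ1 hμF
  have hfin := smoothed_lt_top hF ha1 ha (hgrow a ha1 ha)
  set v := smoothed F a with hv
  -- The argument of `v` is shifted by one: its submultiplicative bound needs a positive base point.
  set C := K * v 1 * ∑' n, F n * ν n with hC
  have hCtop : C < ⊤ := ENNReal.mul_lt_top (ENNReal.mul_lt_top hK.lt_top (hfin 1)) hνF
  have hνv : ∀ N, ∑ n ∈ Finset.range N, v (1 + n) * ν n ≤ C := by
    intro N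
    refine (ENNReal.sum_le_tsum _).trans ?_
    rw [hC, ← ENNReal.tsum_mul_left]
    refine ENNReal.tsum_le_tsum fun n => ?_
    rcases Nat.eq_zero_or_pos n with rfl | h0
    · simp [hν0]
    · calc v (1 + n) * ν n ≤ K * F n * v 1 * ν n := by
            gcongr
            exact smoothed_add_le_mul hsub a one_pos h0
        _ = _ := by ring
  have hW : ∀ N, ∑ n ∈ Finset.range N, v (1 + n) * H n ≤ C / (1 - r) := by
    intro N
    set W := ∑ n ∈ Finset.range N, v (1 + n) * H n with hWdef
    have hWtop : W ≠ ⊤ := (ENNReal.sum_lt_top.2 fun n _ =>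
      ENNReal.mul_lt_top (hfin _) (hH n).lt_top).ne
    have h1 : W ≤ C + r * W := by
      calc W = ∑ n ∈ Finset.range N, v (1 + n) * ν n + ∑ n ∈ Finset.range N,
            ∑ p ∈ Finset.HasAntidiagonal.antidiagonal n, v (1 + p.2 + p.1) * (μ p.1 * H p.2) := by
            rw [hWdef, ← Finset.sum_add_distrib]
            refine Finset.sum_congr rfl fun n _ => ?_
            rw [hren n, mul_add, Finset.mul_sum]
            congr 1
            refine Finset.sum_congr rfl fun p hp => ?_
            rw [← Finset.HasAntidiagonal.mem_antidiagonal.1 hp, add_comm p.1 p.2, add_assoc]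
        _ ≤ C + ∑ l ∈ Finset.range N, ∑' m, v (1 + l + m) * (μ m * H l) :=
            add_le_add (hνv N) (sum_antidiagonal_le
              (fun m l => v (1 + l + m) * (μ m * H l)) N)
        _ ≤ C + ∑ l ∈ Finset.range N, r * (v (1 + l) * H l) := by
            gcongr with l _
            calc ∑' m, v (1 + l + m) * (μ m * H l)
                = (∑' m, μ m * v (1 + l + m)) * H l := by
                  rw [← ENNReal.tsum_mul_right]
                  exact tsum_congr fun m => by ring
              _ ≤ (r * v (1 + l)) * H l := by
                  gcongr
                  exact hcon _ (by omega)
              _ = _ := by ring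
        _ = C + r * W := by rw [hWdef, Finset.mul_sum]
    rw [ENNReal.le_div_iff_mul_le (Or.inl (tsub_pos_of_lt hr).ne') (Or.inr hCtop.ne),
      ENNReal.mul_sub (fun _ _ => hWtop), mul_one, mul_comm W r]
    exact tsub_le_iff_right.2 h1
  refine lt_of_le_of_lt (?_ : _ ≤ C / (1 - r))
    (ENNReal.div_lt_top hCtop.ne (tsub_pos_of_lt hr).ne')
  refine ENNReal.summable.tsum_le_of_sum_range_le fun N => ?_
  refine le_trans (Finset.sum_le_sum fun n _ => ?_) (hW N)
  gcongr
  exact (hmono (Nat.le_add_left n 1)).trans (le_smoothed F a _)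

/-! ### Decomposition of hitting times -/

lemma hitAvoid_le_one {P : E → E → ℝ≥0∞} (hP : IsStochastic P) (t a : E) (n : ℕ) (x : E) :
    hitAvoid P t a n x ≤ 1 := by
  induction n generalizing x with
  | zero => simp [hitAvoid]
  | succ n ih =>
    cases n with
    | zero =>
      simp only [hitAvoid]
      exact (ENNReal.le_tsum t).trans (hP x).le
    | succ n =>
      simp only [hitAvoid]
      refine le_trans (ENNReal.tsum_le_tsum fun k => ?_) (hP x).le
      split_ifs
      · exact zero_le
      · exact (mul_le_mul_right (ih k) _).trans (mul_one _).le

open Classical in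
/-- A one-step recursion valid for every `n`, using that `hitAvoid` vanishes at time `0`. -/
lemma hitAvoid_succ (P : E → E → ℝ≥0∞) (t a : E) (n : ℕ) (x : E) :
    hitAvoid P t a (n + 1) x = (if n = 0 then P x t else 0) +
      ∑' k : E, if k = t ∨ k = a then 0 else P x k * hitAvoid P t a n k := by
  cases n with
  | zero => simp [hitAvoid]
  | succ n => simp [hitAvoid]

/-- First-entrance decomposition at `{t, a}`: the chain hits `t` either before `a`, or after its
first visit to `a`. -/
lemma firstHit_decomp (P : E → E → ℝ≥0∞) {t a : E} (hta : t ≠ a) (n : ℕ) (x : E) :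
    firstHit P x t n = hitAvoid P t a n x +
      ∑ p ∈ Finset.HasAntidiagonal.antidiagonal n, hitAvoid P a t p.1 x * firstHit P a t p.2 := by
  classical
  induction n generalizing x with
  | zero => simp [firstHit, hitAvoid]
  | succ n ih =>
    simp only [firstHit] at ih ⊢
    have hzero : hitAvoid P a t 0 x = 0 := by simp [hitAvoid]
    rw [Finset.Nat.sum_antidiagonal_succ, hzero, zero_mul, zero_add, hitAvoid_succ P t t,
      hitAvoid_succ P t a, add_assoc]
    congr 1
    -- Separate the state `k = a`, where the chain restarts at `a` after one step.
    have hsplit : ∀ k : E, (if k = t ∨ k = t then 0 else P x k * hitAvoid P t t n k) =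
        (if k = a then P x a * hitAvoid P t t n a else 0) +
        ((if k = t ∨ k = a then 0 else P x k * hitAvoid P t a n k) +
          ∑ p ∈ Finset.HasAntidiagonal.antidiagonal n,
            (if k = a ∨ k = t then 0 else P x k * hitAvoid P a t p.1 k) *
              hitAvoid P t t p.2 a) := by
      intro k
      by_cases hk : k = a
      · subst hk
        simp [hta.symm]
      · by_cases hk' : k = t
        · subst hk'
          simp [hta]
        · simp only [hk, hk', or_self, if_false, zero_add]
          rw [ih k, mul_add, Finset.mul_sum]
          simp only [mul_assoc]
    rw [tsum_congr hsplit, ENNReal.tsum_add, ENNReal.tsum_add, tsum_ite_eq, add_left_comm]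
    congr 1
    rw [Summable.tsum_finsetSum (fun _ _ => ENNReal.summable)]
    simp only [hitAvoid_succ P a t, ENNReal.tsum_mul_right, add_mul, Finset.sum_add_distrib]
    congr 1
    rw [Finset.sum_eq_single (0, n)]
    · simp
    · rintro ⟨m, l⟩ hp hne
      have : m ≠ 0 := by
        rintro rfl
        apply hne
        simpa using hp
      simp [this]
    · simp

/-- Double-sum form of `∑_n c n ∑_{m + l = n} g m h l`. -/
lemma tsum_antidiagonal (c g h : ℕ → ℝ≥0∞) :
    ∑' n, c n * ∑ p ∈ Finset.HasAntidiagonal.antidiagonal n, g p.1 * h p.2 =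
      ∑' m, ∑' l, c (m + l) * (g m * h l) := by
  rw [← ENNReal.tsum_prod' (f := fun p : ℕ × ℕ => c (p.1 + p.2) * (g p.1 * h p.2)),
    ← (Finset.HasAntidiagonal.sigmaAntidiagonalEquivProd (A := ℕ)).tsum_eq, ENNReal.tsum_sigma']
  refine tsum_congr fun n => ?_
  rw [tsum_fintype, Finset.mul_sum,
    ← Finset.sum_coe_sort (Finset.HasAntidiagonal.antidiagonal n) (fun p => c n * (g p.1 * h p.2))]
  refine Finset.sum_congr rfl fun p _ => ?_
  have := Finset.HasAntidiagonal.mem_antidiagonal.1 p.2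
  simp [this]

/-! ### Moments of hitting times -/

theorem stmt_10 (f : ℕ → ℝ) (hpos : ∀ n, 0 < f n) (hmono : Monotone f)
    (htop : Tendsto f atTop atTop)
    (K : ℝ) (hK : 0 < K)
    (hsub : ∀ x y : ℕ, 0 < x → 0 < y → f (x + y) ≤ K * f x * f y)
    (hlog : limsup (fun n : ℕ => ((Real.log (f n) / n : ℝ) : EReal)) atTop = 0)
    (S : Type*) [Countable S] (P : S → S → ℝ≥0∞)
    (hP : IsStochastic P) (hirr : IsIrreducible P) (hrec : IsRecurrent P)
    (i : S) (hfin : momGen f P i i < ⊤) :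
    ∀ j : S, momGen f P i j < ⊤ := by
  intro j
  by_cases hij : j = i
  · rwa [hij]
  set F : ℕ → ℝ≥0∞ := fun n => ENNReal.ofReal (f n) with hFdef
  set μ : ℕ → ℝ≥0∞ := fun n => hitAvoid P i j n i with hμ
  set ν : ℕ → ℝ≥0∞ := fun n => hitAvoid P j i n i with hν
  have hFmono : Monotone F := fun m n h => ENNReal.ofReal_le_ofReal (hmono h)
  have hret : ∀ n, firstHit P i i n = μ n +
      ∑ p ∈ Finset.HasAntidiagonal.antidiagonal n, ν p.1 * firstHit P j i p.2 :=
    fun n => firstHit_decomp P (Ne.symm hij) n i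
  have hren : ∀ n, firstHit P i j n = ν n +
      ∑ p ∈ Finset.HasAntidiagonal.antidiagonal n, μ p.1 * firstHit P i j p.2 :=
    fun n => firstHit_decomp P hij n i
  have hμ0 : μ 0 = 0 := by simp [hμ, hitAvoid]
  have hν0 : ν 0 = 0 := by simp [hν, hitAvoid]
  have hμle : ∀ n, μ n ≤ firstHit P i i n := fun n => (hret n).symm ▸ le_self_add
  set s := ∑' n, firstHit P j i n with hs
  have hspos : s ≠ 0 := by
    obtain ⟨n, hn⟩ := hirr j i
    exact ne_of_gt (hn.trans_le (ENNReal.le_tsum n))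
  -- If `ν` vanished, the renewal equation would force `P_i(T_ij = n) = 0` for all `n`.
  have hνpos : ∑' n, ν n ≠ 0 := by
    intro h
    rw [ENNReal.tsum_eq_zero] at h
    have hz : ∀ n, firstHit P i j n = 0 := by
      intro n
      induction n using Nat.strong_induction_on with
      | _ n ih =>
        rw [hren n, h n, zero_add]
        refine Finset.sum_eq_zero fun p hp => ?_
        have hp' := Finset.HasAntidiagonal.mem_antidiagonal.1 hp
        rcases Nat.eq_zero_or_pos p.1 with h0 | h0
        · rw [h0, hμ0, zero_mul]
        · rw [ih p.2 (by omega), mul_zero]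
    obtain ⟨n, hn⟩ := hirr i j
    exact hn.ne' (hz n)
  have hmass : ∑' n, μ n + (∑' n, ν n) * s = 1 := by
    rw [← hrec i, tsum_congr hret, ENNReal.tsum_add]
    congr 1
    have := tsum_antidiagonal (fun _ => 1) ν (firstHit P j i)
    simp only [one_mul, ENNReal.tsum_mul_left, ENNReal.tsum_mul_right] at this
    exact this.symm
  have hμ1 : ∑' n, μ n < 1 := by
    have hne : ∑' n, μ n ≠ ⊤ := ne_top_of_le_ne_top ENNReal.one_ne_top (hmass ▸ le_self_add)
    calc ∑' n, μ n < ∑' n, μ n + (∑' n, ν n) * s :=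
          ENNReal.lt_add_right hne (mul_ne_zero hνpos hspos)
      _ = 1 := hmass
  have hμF : ∑' n, F n * μ n < ⊤ :=
    lt_of_le_of_lt (ENNReal.tsum_le_tsum fun n => by gcongr; exact hμle n) hfin
  -- On the event of hitting `j` before `i`, the return time to `i` exceeds the hitting time of `j`.
  have hνF : ∑' n, F n * ν n < ⊤ := by
    have h1 : (∑' n, F n * ν n) * s ≤ momGen f P i i := by
      calc (∑' n, F n * ν n) * s = ∑' m, ∑' l, F m * (ν m * firstHit P j i l) := by
            rw [← ENNReal.tsum_mul_right]
            refine tsum_congr fun m => ?_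
            rw [ENNReal.tsum_mul_left, ENNReal.tsum_mul_left, mul_assoc]
        _ ≤ ∑' m, ∑' l, F (m + l) * (ν m * firstHit P j i l) := by
            refine ENNReal.tsum_le_tsum fun m => ENNReal.tsum_le_tsum fun l => ?_
            gcongr
            exact hFmono (Nat.le_add_right m l)
        _ = ∑' n, F n * ∑ p ∈ Finset.HasAntidiagonal.antidiagonal n, ν p.1 * firstHit P j i p.2 :=
            (tsum_antidiagonal F ν (firstHit P j i)).symm
        _ ≤ momGen f P i i := by
            refine ENNReal.tsum_le_tsum fun n => ?_
            rw [hret n]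
            gcongr
            exact le_add_self
    exact ENNReal.lt_top_of_mul_ne_top_left (h1.trans_lt hfin).ne hspos
  have hgrow : ∀ a : ℝ≥0∞, 1 < a → a ≠ ⊤ → ∀ᶠ n in atTop, F n ≤ a ^ n := by
    intro a ha1 ha
    lift a to NNReal using ha
    have ha1' : (1 : ℝ) < a := by exact_mod_cast ha1
    have h0 : limsup (fun n : ℕ => ((Real.log (f n) / n : ℝ) : EReal)) atTop <
        ((Real.log a : ℝ) : EReal) := by
      rw [hlog]
      exact_mod_cast Real.log_pos ha1'
    filter_upwards [eventually_lt_of_limsup_lt h0, eventually_gt_atTop 0] with n hn hn0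
    have hn' : Real.log (f n) / n < Real.log a := by exact_mod_cast hn
    have hnpos : (0 : ℝ) < n := by exact_mod_cast hn0
    rw [div_lt_iff₀ hnpos, mul_comm, ← Real.log_pow] at hn'
    have hle : f n ≤ (a : ℝ) ^ n :=
      ((Real.log_lt_log_iff (hpos n) (by positivity)).1 hn').le
    calc F n ≤ ENNReal.ofReal ((a : ℝ) ^ n) := ENNReal.ofReal_le_ofReal hle
      _ = (a : ℝ≥0∞) ^ n := by
        rw [ENNReal.ofReal_pow a.coe_nonneg, ENNReal.ofReal_coe_nnreal]
  refine renewal_moment_lt_top (K := ENNReal.ofReal K) ENNReal.ofReal_ne_top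
    (fun n => ENNReal.ofReal_ne_top) hFmono ?_ hgrow hμ0 hμ1 hμF hν0 hνF
    (fun n => ne_top_of_le_ne_top ENNReal.one_ne_top (hitAvoid_le_one hP j j n i)) hren
  intro x y hx hy
  calc F (x + y) ≤ ENNReal.ofReal (K * f x * f y) := ENNReal.ofReal_le_ofReal (hsub x y hx hy)
    _ = ENNReal.ofReal K * F x * F y := by
      rw [ENNReal.ofReal_mul (mul_nonneg hK.le (hpos x).le), ENNReal.ofReal_mul hK.le]

end MCPaper
end

section
/- Let f : ℕ → (0,∞) be non-decreasing, let K > 0 satisfy f(x+y) ≤ K·f(x)·f(y) for all positive integers x, y, and suppose limsup_{n→∞} (1/n)·log f(n) = 0. Let U^(1), U^(2), ... be i.i.d. random variables taking values in {1, 2, 3, ...} with E f(U^(1)) < ∞. Then limsup_{m→∞} (1/m)·log E f(U^(1) + ... + U^(m)) = 0. -/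
/-!
Write `F = ENNReal.ofReal ∘ f` and fix a threshold `N`. A summand `k ≤ N` raises the argument of `F`
by at most `N`, while a summand `k > N` can be split off by submultiplicativity at the price of a
factor `K f k`. With the weight `g k = 1` for `k ≤ N` and `g k = K f k` for `k > N`, this reads
`F (a + k) ≤ g k * F (a + N)` for `a > 0`, and induction on `m` (`tsum_convPow_le`) gives
`E F (a + S_m) ≤ F (a + N m) (E g(U))^m`.

Since `E f(U) < ∞`, the number `E g(U)` is at most `1 + ε` for large `N` (`exists_weight_le`), and
`F (1 + N m)` is at most `exp (ε m)` for large `m` because `f` grows subexponentially. So the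
exponential growth rate of `E f(S_m)` is at most `2 ε`. It is at least `0` because
`f 0 ≤ E f(S_m)` by monotonicity and because the convolution powers have total mass one.
-/

open Filter
open scoped ENNReal

namespace MCPaper

/-- convolution of two probability mass functions on `ℕ`: the law of the sum of
independent random variables with laws `p` and `q`. -/
noncomputable def conv (p q : ℕ → ℝ≥0∞) (n : ℕ) : ℝ≥0∞ :=
  ∑ k ∈ Finset.range (n + 1), p k * q (n - k)

/-- `convPow p m` is the `m`-fold convolution power of `p`: the law of the sum of `m`
i.i.d. random variables with law `p` (the Dirac mass at `0` for `m = 0`). -/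
noncomputable def convPow (p : ℕ → ℝ≥0∞) : ℕ → ℕ → ℝ≥0∞
  | 0 => fun n => if n = 0 then 1 else 0
  | m + 1 => conv (convPow p m) p

theorem tsum_mul_conv (h p q : ℕ → ℝ≥0∞) :
    ∑' n, h n * conv p q n = ∑' k, ∑' j, h (j + k) * (p j * q k) := by
  have hanti : ∀ n, h n * conv p q n
      = ∑' x : Finset.HasAntidiagonal.antidiagonal n, h (x.1.1 + x.1.2) * (p x.1.1 * q x.1.2) := by
    intro n
    rw [conv, ← Finset.Nat.sum_antidiagonal_eq_sum_range_succ (fun i j => p i * q j),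
      Finset.tsum_subtype (Finset.HasAntidiagonal.antidiagonal n)
        (fun x : ℕ × ℕ => h (x.1 + x.2) * (p x.1 * q x.2)), Finset.mul_sum]
    refine Finset.sum_congr rfl fun x hx => ?_
    rw [Finset.HasAntidiagonal.mem_antidiagonal.1 hx]
  simp_rw [hanti]
  rw [ENNReal.tsum_comm (f := fun k j => h (j + k) * (p j * q k)),
    ← ENNReal.tsum_prod (f := fun j k => h (j + k) * (p j * q k)),
    ← ENNReal.tsum_sigma (fun (n : ℕ) (x : Finset.HasAntidiagonal.antidiagonal n) =>
      h (x.1.1 + x.1.2) * (p x.1.1 * q x.1.2))]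
  exact Finset.HasAntidiagonal.sigmaAntidiagonalEquivProd.tsum_eq
    (fun x : ℕ × ℕ => h (x.1 + x.2) * (p x.1 * q x.2))

theorem tsum_convPow (u : ℕ → ℝ≥0∞) (husum : ∑' n, u n = 1) (m : ℕ) :
    ∑' n, convPow u m n = 1 := by
  induction m with
  | zero => simp [convPow]
  | succ m ih =>
    have h := tsum_mul_conv (fun _ => 1) (convPow u m) u
    simp only [one_mul, ENNReal.tsum_mul_right, ih, husum] at h
    exact h

/-- The factor paid for a summand `k`: nothing when `k ≤ N` (such a summand is absorbed in the
argument of `f`), and `K f k` when `k > N`. -/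
noncomputable def weight (f : ℕ → ℝ) (K : ℝ) (N k : ℕ) : ℝ≥0∞ :=
  if k ≤ N then 1 else ENNReal.ofReal (K * f k)

theorem ofReal_add_le (f : ℕ → ℝ) (hpos : ∀ n, 0 < f n) (hmono : Monotone f)
    (K : ℝ) (hK : 0 < K)
    (hsub : ∀ x y : ℕ, 0 < x → 0 < y → f (x + y) ≤ K * f x * f y) (N a k : ℕ) (ha : 0 < a) :
    ENNReal.ofReal (f (a + k)) ≤ weight f K N k * ENNReal.ofReal (f (a + N)) := by
  unfold weight
  split_ifs with hk
  · rw [one_mul]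
    exact ENNReal.ofReal_le_ofReal (hmono (by omega))
  · have hKf : 0 < K * f k := mul_pos hK (hpos k)
    rw [← ENNReal.ofReal_mul hKf.le]
    refine ENNReal.ofReal_le_ofReal ?_
    calc f (a + k) ≤ K * f a * f k := hsub a k ha (by omega)
      _ = K * f k * f a := by ring
      _ ≤ K * f k * f (a + N) := mul_le_mul_of_nonneg_left (hmono (by omega)) hKf.le

theorem tsum_convPow_le (f : ℕ → ℝ) (hpos : ∀ n, 0 < f n) (hmono : Monotone f)
    (K : ℝ) (hK : 0 < K)
    (hsub : ∀ x y : ℕ, 0 < x → 0 < y → f (x + y) ≤ K * f x * f y)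
    (u : ℕ → ℝ≥0∞) (N m : ℕ) : ∀ a : ℕ, 0 < a →
    ∑' n, ENNReal.ofReal (f (a + n)) * convPow u m n
      ≤ ENNReal.ofReal (f (a + N * m)) * (∑' k, weight f K N k * u k) ^ m := by
  induction m with
  | zero =>
    intro a _
    rw [tsum_eq_single 0 (by intro n hn; simp [convPow, hn])]
    simp [convPow]
  | succ m ih =>
    intro a ha
    have hstep := ih (a + N) (by omega)
    calc ∑' n, ENNReal.ofReal (f (a + n)) * convPow u (m + 1) n
        = ∑' k, ∑' j, ENNReal.ofReal (f (a + (j + k))) * (convPow u m j * u k) :=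
          tsum_mul_conv (fun n => ENNReal.ofReal (f (a + n))) _ _
      _ ≤ ∑' k, ∑' j, (weight f K N k * u k)
            * (ENNReal.ofReal (f (a + N + j)) * convPow u m j) := by
          refine ENNReal.tsum_le_tsum fun k => ENNReal.tsum_le_tsum fun j => ?_
          have h := ofReal_add_le f hpos hmono K hK hsub N (a + j) k (by omega)
          rw [add_assoc a j k, add_right_comm a j N] at h
          calc _ ≤ (weight f K N k * ENNReal.ofReal (f (a + N + j)))
                    * (convPow u m j * u k) := by gcongr
            _ = _ := by ring
      _ = (∑' k, weight f K N k * u k)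
            * ∑' j, ENNReal.ofReal (f (a + N + j)) * convPow u m j := by
          simp_rw [ENNReal.tsum_mul_left, ENNReal.tsum_mul_right]
      _ ≤ (∑' k, weight f K N k * u k) * (ENNReal.ofReal (f (a + N + N * m))
            * (∑' k, weight f K N k * u k) ^ m) := by gcongr
      _ = _ := by
          rw [show a + N * (m + 1) = a + N + N * m by ring, pow_succ]
          ring

/-- The excess of the expected weight over the total mass `1` is bounded by a tail of the
convergent series defining `K * E f(U)`. -/
theorem exists_weight_le (f : ℕ → ℝ) (K : ℝ) (hK : 0 < K)
    (u : ℕ → ℝ≥0∞) (husum : ∑' n : ℕ, u n = 1)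
    (hfin : ∑' n : ℕ, ENNReal.ofReal (f n) * u n < ⊤) (ε : ℝ≥0∞) (hε : 0 < ε) :
    ∃ N : ℕ, 0 < N ∧ ∑' k, weight f K N k * u k ≤ 1 + ε := by
  have hKfin : ∑' n : ℕ, ENNReal.ofReal (K * f n) * u n ≠ ⊤ := by
    simp_rw [ENNReal.ofReal_mul hK.le, mul_assoc, ENNReal.tsum_mul_left]
    exact ENNReal.mul_ne_top ENNReal.ofReal_ne_top hfin.ne
  have htail := ENNReal.tendsto_sum_nat_add _ hKfin
  obtain ⟨N, hN, hN0⟩ := ((htail.eventually_lt_const hε).and (eventually_gt_atTop 0)).exists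
  refine ⟨N, hN0, ?_⟩
  have hsplit : ∀ k, weight f K N k * u k
      ≤ u k + if N ≤ k then ENNReal.ofReal (K * f k) * u k else 0 := by
    intro k
    unfold weight
    split_ifs with h1 h2 h2
    · simp
    · simp
    · simp
    · omega
  calc ∑' k, weight f K N k * u k
      ≤ ∑' k, (u k + if N ≤ k then ENNReal.ofReal (K * f k) * u k else 0) :=
        ENNReal.tsum_le_tsum hsplit
    _ = 1 + ∑' k, ENNReal.ofReal (K * f (k + N)) * u (k + N) := by
        have hshift := ENNReal.summable.sum_add_tsum_nat_add' (k := N)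
          (f := fun k => if N ≤ k then ENNReal.ofReal (K * f k) * u k else 0)
        rw [Finset.sum_eq_zero (fun i hi => if_neg (by simpa using hi)), zero_add] at hshift
        rw [ENNReal.tsum_add, husum, ← hshift]
        simp
    _ ≤ 1 + ε := by gcongr

/-- The upper bound on the growth rate, in multiplicative form. -/
theorem eventually_tsum_le (f : ℕ → ℝ) (hpos : ∀ n, 0 < f n) (hmono : Monotone f)
    (K : ℝ) (hK : 0 < K)
    (hsub : ∀ x y : ℕ, 0 < x → 0 < y → f (x + y) ≤ K * f x * f y)
    (hlog : limsup (fun n : ℕ => ((Real.log (f n) / n : ℝ) : EReal)) atTop = 0)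
    (u : ℕ → ℝ≥0∞) (husum : ∑' n : ℕ, u n = 1)
    (hfin : ∑' n : ℕ, ENNReal.ofReal (f n) * u n < ⊤) (ε : ℝ) (hε : 0 < ε) :
    ∀ᶠ m : ℕ in atTop, ∑' n : ℕ, ENNReal.ofReal (f n) * convPow u m n
      ≤ ENNReal.ofReal (Real.exp (2 * ε * m)) := by
  obtain ⟨N, hN0, hN⟩ := exists_weight_le f K hK u husum hfin (ENNReal.ofReal ε) (by simpa)
  -- `1 + N m ≤ (N + 1) m`, so the rate `ε / (N + 1)` for `f` yields the rate `ε` in `m`.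
  have hδ : 0 < ε / (N + 1) := by positivity
  have hev : ∀ᶠ n : ℕ in atTop, ((Real.log (f n) / n : ℝ) : EReal) < ((ε / (N + 1) : ℝ) : EReal) :=
    eventually_lt_of_limsup_lt (by rw [hlog]; exact_mod_cast hδ)
  have hto : Tendsto (fun m : ℕ => 1 + N * m) atTop atTop :=
    tendsto_atTop_mono (fun m => by
      have := Nat.le_mul_of_pos_left m hN0
      simp only [id]
      omega) tendsto_id
  filter_upwards [hto.eventually hev, eventually_ge_atTop 1] with m hm hm1
  rw [EReal.coe_lt_coe_iff, div_lt_iff₀ (by positivity)] at hm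
  have hm1' : (1 : ℝ) ≤ m := by exact_mod_cast hm1
  have hf : f (1 + N * m) ≤ Real.exp (ε * m) := by
    rw [← Real.log_le_iff_le_exp (hpos _)]
    refine hm.le.trans ?_
    push_cast
    rw [div_mul_eq_mul_div, div_le_iff₀ (by positivity), mul_assoc]
    refine mul_le_mul_of_nonneg_left ?_ hε.le
    nlinarith
  have hG : ∑' k, weight f K N k * u k ≤ ENNReal.ofReal (Real.exp ε) := by
    refine hN.trans ?_
    rw [← ENNReal.ofReal_one, ← ENNReal.ofReal_add zero_le_one hε.le]
    exact ENNReal.ofReal_le_ofReal (by linarith [Real.add_one_le_exp ε])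
  calc ∑' n, ENNReal.ofReal (f n) * convPow u m n
      ≤ ∑' n, ENNReal.ofReal (f (1 + n)) * convPow u m n := by
        refine ENNReal.tsum_le_tsum fun n => ?_
        gcongr
        exact hmono (by omega)
    _ ≤ ENNReal.ofReal (f (1 + N * m)) * (∑' k, weight f K N k * u k) ^ m :=
        tsum_convPow_le f hpos hmono K hK hsub u N m 1 one_pos
    _ ≤ ENNReal.ofReal (Real.exp (ε * m)) * ENNReal.ofReal (Real.exp ε) ^ m := by gcongr
    _ = ENNReal.ofReal (Real.exp (2 * ε * m)) := by
        rw [← ENNReal.ofReal_pow (Real.exp_pos _).le, ← ENNReal.ofReal_mul (Real.exp_pos _).le,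
          ← Real.exp_nat_mul, ← Real.exp_add]
        congr 2
        ring

theorem stmt_11 (f : ℕ → ℝ) (hpos : ∀ n, 0 < f n) (hmono : Monotone f)
    (K : ℝ) (hK : 0 < K)
    (hsub : ∀ x y : ℕ, 0 < x → 0 < y → f (x + y) ≤ K * f x * f y)
    (hlog : limsup (fun n : ℕ => ((Real.log (f n) / n : ℝ) : EReal)) atTop = 0)
    (u : ℕ → ℝ≥0∞) (hu0 : u 0 = 0) (husum : ∑' n : ℕ, u n = 1)
    (hfin : ∑' n : ℕ, ENNReal.ofReal (f n) * u n < ⊤) :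
    (∀ m : ℕ, (∑' n : ℕ, ENNReal.ofReal (f n) * convPow u m n) ≠ ⊤) ∧
      limsup
        (fun m : ℕ =>
          ((Real.log (∑' n : ℕ, ENNReal.ofReal (f n) * convPow u m n).toReal / m : ℝ) : EReal))
        atTop = 0 := by
  have hne : ∀ m : ℕ, (∑' n : ℕ, ENNReal.ofReal (f n) * convPow u m n) ≠ ⊤ := by
    intro m
    obtain ⟨N, -, hN⟩ := exists_weight_le f K hK u husum hfin 1 one_pos
    refine ne_top_of_le_ne_top ?_ ((ENNReal.tsum_le_tsum fun n => ?_).trans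
      (tsum_convPow_le f hpos hmono K hK hsub u N m 1 one_pos))
    · refine ENNReal.mul_ne_top ENNReal.ofReal_ne_top (ENNReal.pow_ne_top ?_)
      exact ne_top_of_le_ne_top (by simp) hN
    · gcongr
      exact hmono (by omega)
  have hlow : ∀ m : ℕ, f 0 ≤ (∑' n : ℕ, ENNReal.ofReal (f n) * convPow u m n).toReal := by
    intro m
    rw [← ENNReal.ofReal_le_iff_le_toReal (hne m)]
    calc ENNReal.ofReal (f 0) = ∑' n, ENNReal.ofReal (f 0) * convPow u m n := by
          rw [ENNReal.tsum_mul_left, tsum_convPow u husum, mul_one]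
      _ ≤ _ := by
          refine ENNReal.tsum_le_tsum fun n => ?_
          gcongr
          exact hmono (Nat.zero_le n)
  refine ⟨hne, le_antisymm ?_ ?_⟩
  · refine EReal.le_of_forall_lt_iff_le.1 fun c hc => ?_
    have hc0 : 0 < c := by exact_mod_cast hc
    refine limsup_le_of_le (by isBoundedDefault) ?_
    filter_upwards [eventually_tsum_le f hpos hmono K hK hsub hlog u husum hfin (c / 2)
      (by positivity), eventually_gt_atTop 0] with m hm hm0
    have hm0' : (0 : ℝ) < m := by exact_mod_cast hm0
    rw [EReal.coe_le_coe_iff, div_le_iff₀ hm0',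
      Real.log_le_iff_le_exp ((hpos 0).trans_le (hlow m))]
    refine (ENNReal.toReal_le_of_le_ofReal (Real.exp_pos _).le hm).trans_eq ?_
    congr 1
    ring
  · have hlim : Tendsto (fun m : ℕ => ((Real.log (f 0) / m : ℝ) : EReal)) atTop (nhds 0) :=
      (continuous_coe_real_ereal.tendsto 0).comp (tendsto_const_div_atTop_nhds_zero_nat _)
    rw [← hlim.limsup_eq]
    refine limsup_le_limsup (Eventually.of_forall fun m => ?_)
    rw [EReal.coe_le_coe_iff]
    exact div_le_div_of_nonneg_right (Real.log_le_log (hpos 0) (hlow m)) (Nat.cast_nonneg m)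

end MCPaper
end

section
/- Let an irreducible recurrent discrete-time Markov chain on a finite or countable state space be given, let i ≠ j be states, and let π := P_i(T_ij < T_ii) be the probability of hitting j before returning to i started from i; by irreducibility and recurrence π > 0. If π < 1, then under P_i the hitting time T_ij has the same distribution as V + U^(1) + ... + U^(M), where M, V, U^(1), U^(2), ... are independent, M is geometric with P(M = m) = (1-π)^m·π for m = 0, 1, 2, ..., each U^(r) is distributed as U_ij, and V is distributed as V_ij. If π = 1, then T_ij has the same distribution as V_ij. -/
/-!
Decomposing a trajectory at its first visit to `i` gives the renewal equation
`P_x(T_xj = n) = P_x(T_xj = n, i avoided) + ∑ k, P_x(T_xi = k, j avoided) * P_i(T_ij = n - k)`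
(`hitAvoid_decomp`). Write `u`, `v`, `f` for the unnormalised laws of `U_ij`, `V_ij` and the law of
`T_ij`, read as power series over `ℝ≥0∞`. At `x = i` the equation is `f = v + u * f`. Since `u` has
no constant term, iterating it gives `f = ∑ m, u ^ m * v` coefficientwise (`renewal_solution`).

Let `U`, `V` be the total masses of `u`, `v`, so `V = π`. Stochasticity gives `U + V ≤ 1`
(`tsum_le_one`). The decomposition of the return time to `i` at its first visit to `j`, together with
recurrence, gives `1 = U + V * P_j(T_ji < ∞) ≤ U + V`. Hence `U = 1 - π`, and normalising `u` and `v`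
turns `u ^ m * v` into `(1 - π) ^ m * π` times a convolution of probability laws. Finally `π > 0`,
because `V = 0` would force `f = 0`, against irreducibility.
-/

open Filter
open scoped ENNReal

namespace MCPaper

variable {E : Type*}

/-- Law of the first entrance time into a set `A`, characterised by its one-step recursion:
its total mass is at most one. -/
lemma tsum_le_one {S : Type*} (P : S → S → ℝ≥0∞) (hP : IsStochastic P) (A : S → Prop)
    [DecidablePred A] (g : ℕ → S → ℝ≥0∞) (h0 : ∀ x, g 0 x = 0)
    (h1 : ∀ x, g 1 x = ∑' k, if A k then P x k else 0)
    (h2 : ∀ n x, g (n + 2) x = ∑' k, if A k then 0 else P x k * g (n + 1) k) (x : S) :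
    ∑' n, g n x ≤ 1 := by
  have key : ∀ N x, ∑ n ∈ Finset.range N, g (n + 1) x ≤ 1 := by
    intro N
    induction N with
    | zero => simp
    | succ N ih =>
      intro x
      rw [Finset.sum_range_succ', h1]
      simp only [h2]
      rw [← Summable.tsum_finsetSum (fun _ _ => ENNReal.summable), ← ENNReal.tsum_add, ← hP x]
      refine ENNReal.tsum_le_tsum fun k => ?_
      by_cases hk : A k
      · simp [hk]
      · simp only [hk, if_false, add_zero, ← Finset.mul_sum]
        exact mul_le_of_le_one_right' (ih k)
  rw [tsum_eq_zero_add' ENNReal.summable, h0, zero_add, ENNReal.tsum_eq_iSup_nat]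
  exact iSup_le fun N => key N x

/-- First-visit decomposition: a path that hits `t` at time `n` either avoids `a`, or visits `a`
first at some time `k` and then goes on from `a` to hit `t` after `n - k` more steps. -/
lemma hitAvoid_decomp {S : Type*} (P : S → S → ℝ≥0∞) {t a : S} (hat : a ≠ t) (n : ℕ) (x : S) :
    hitAvoid P t t n x = hitAvoid P t a n x +
      ∑ k ∈ Finset.range (n + 1), hitAvoid P a t k x * hitAvoid P t t (n - k) a := by
  classical
  induction n using Nat.twoStepInduction generalizing x with
  | zero => simp [hitAvoid]
  | one => simp [hitAvoid, Finset.sum_range_succ]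
  | more n _ ih =>
    have hR : ∑ k ∈ Finset.range (n + 2 + 1), hitAvoid P a t k x * hitAvoid P t t (n + 2 - k) a
        = (∑' k, if k = t ∨ k = a then 0 else P x k *
            ∑ l ∈ Finset.range (n + 1 + 1), hitAvoid P a t l k * hitAvoid P t t (n + 1 - l) a)
          + P x a * hitAvoid P t t (n + 1) a := by
      rw [Finset.sum_range_succ', Finset.sum_range_succ']
      simp only [hitAvoid, zero_mul, add_zero, zero_add]
      congr 1
      simp only [← ENNReal.tsum_mul_right]
      rw [← Summable.tsum_finsetSum (fun _ _ => ENNReal.summable)]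
      refine tsum_congr fun k => ?_
      by_cases hk : k = t ∨ k = a
      · simp [hk, or_comm.mp hk]
      · have hk' : ¬ (k = a ∨ k = t) := fun h => hk h.symm
        rw [if_neg hk, Finset.sum_range_succ' _ (n + 1)]
        simp only [hk', if_false, hitAvoid, zero_mul, add_zero, Finset.mul_sum]
        refine Finset.sum_congr rfl fun l _ => ?_
        rw [mul_assoc, show n + 2 - (l + 1 + 1) = n + 1 - (l + 1) by omega]
    rw [hR]
    have hs : P x a * hitAvoid P t t (n + 1) a
        = ∑' k, if k = a then P x k * hitAvoid P t t (n + 1) k else 0 := by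
      rw [tsum_ite_eq]
    rw [hs, ← add_assoc]
    simp only [hitAvoid, or_self]
    rw [← ENNReal.tsum_add, ← ENNReal.tsum_add]
    refine tsum_congr fun k => ?_
    by_cases hka : k = a
    · subst hka; simp [hat]
    · by_cases hkt : k = t
      · simp [hkt, hat.symm]
      · simp only [hka, hkt, or_self, if_false, add_zero]
        rw [← mul_add, ← ih k]

lemma conv_eq_coeff (p q : ℕ → ℝ≥0∞) (n : ℕ) :
    conv p q n = PowerSeries.coeff n (PowerSeries.mk p * PowerSeries.mk q) := by
  rw [PowerSeries.coeff_mul, Finset.Nat.sum_antidiagonal_eq_sum_range_succ_mk]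
  simp [conv]

lemma mk_convPow (p : ℕ → ℝ≥0∞) (m : ℕ) :
    PowerSeries.mk (convPow p m) = PowerSeries.mk p ^ m := by
  induction m with
  | zero => ext n; simp [convPow, PowerSeries.coeff_one]
  | succ m ih =>
    ext n
    rw [pow_succ, ← ih, ← conv_eq_coeff, PowerSeries.coeff_mk, convPow]

lemma tsum_conv (p q : ℕ → ℝ≥0∞) :
    ∑' n, conv p q n = (∑' n, p n) * ∑' n, q n := by
  have h : ∀ n, conv p q n = ∑' k, if k ≤ n then p k * q (n - k) else 0 := by
    intro n
    rw [tsum_eq_sum (s := Finset.range (n + 1)), conv]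
    · refine Finset.sum_congr rfl fun k hk => ?_
      rw [if_pos (by simpa [Nat.lt_succ_iff] using hk)]
    · intro k hk
      rw [if_neg (by simpa [Nat.lt_succ_iff] using hk)]
  simp only [h]
  rw [ENNReal.tsum_comm, ← ENNReal.tsum_mul_right]
  refine tsum_congr fun k => ?_
  have hs := Summable.sum_add_tsum_nat_add'
    (f := fun n => if k ≤ n then p k * q (n - k) else 0) (k := k) ENNReal.summable
  rw [← ENNReal.tsum_mul_left, ← hs, Finset.sum_eq_zero, zero_add]
  · simp
  · intro n hn
    rw [if_neg (by simpa using hn)]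

/-- The renewal equation `F = B + A * F` with `A` without constant term has the unique solution
`∑ m, A ^ m * B`; only the terms `m ≤ n` contribute to the coefficient of degree `n`. -/
lemma renewal_solution (A B F : PowerSeries ℝ≥0∞) (hA : PowerSeries.constantCoeff A = 0)
    (h : F = B + A * F) (n : ℕ) :
    PowerSeries.coeff n F = ∑' m, PowerSeries.coeff n (A ^ m * B) := by
  have hz : ∀ (G : PowerSeries ℝ≥0∞) (m : ℕ), n < m → PowerSeries.coeff n (A ^ m * G) = 0 := by
    intro G m hm
    have hd : PowerSeries.X ^ m ∣ A ^ m * G :=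
      Dvd.dvd.mul_right (pow_dvd_pow_of_dvd (PowerSeries.X_dvd_iff.mpr hA) m) G
    exact PowerSeries.X_pow_dvd_iff.mp hd n hm
  have hit : ∀ M : ℕ, F = (∑ m ∈ Finset.range M, A ^ m * B) + A ^ M * F := by
    intro M
    induction M with
    | zero => simp
    | succ M ih =>
      have e : A ^ M * F = A ^ M * B + A ^ (M + 1) * F := by
        conv_lhs => rw [h]
        ring
      rw [Finset.sum_range_succ, add_assoc, ← e]
      exact ih
  rw [tsum_eq_sum (s := Finset.range (n + 1))
    (fun m hm => hz B m (by simpa [Nat.lt_succ_iff] using hm))]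
  conv_lhs => rw [hit (n + 1)]
  rw [map_add, hz F (n + 1) (Nat.lt_succ_self n), add_zero, map_sum]

lemma hitAvoid_self_mass_le_one {S : Type*} (P : S → S → ℝ≥0∞) (hP : IsStochastic P) (t x : S) :
    ∑' n, hitAvoid P t t n x ≤ 1 := by
  classical
  refine tsum_le_one P hP (fun k => k = t) (fun n x => hitAvoid P t t n x) ?_ ?_ ?_ x
  · intro x; simp [hitAvoid]
  · intro x; simp only [hitAvoid]; rw [tsum_ite_eq]
  · intro n x; simp [hitAvoid]

lemma hitAvoid_mass_add_le_one {S : Type*} (P : S → S → ℝ≥0∞) (hP : IsStochastic P) {t a : S}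
    (hta : t ≠ a) (x : S) :
    ∑' n, hitAvoid P t a n x + ∑' n, hitAvoid P a t n x ≤ 1 := by
  classical
  rw [← ENNReal.tsum_add]
  refine tsum_le_one P hP (fun k => k = t ∨ k = a)
    (fun n x => hitAvoid P t a n x + hitAvoid P a t n x) ?_ ?_ ?_ x
  · intro x; simp [hitAvoid]
  · intro x
    have h : ∀ k, (if k = t ∨ k = a then P x k else 0)
        = (if k = t then P x k else 0) + (if k = a then P x k else 0) := by
      intro k
      by_cases h1 : k = t
      · subst h1; simp [hta]
      · simp [h1]
    simp only [h, hitAvoid]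
    rw [ENNReal.tsum_add, tsum_ite_eq, tsum_ite_eq]
  · intro n x
    simp only [hitAvoid]
    rw [← ENNReal.tsum_add]
    refine tsum_congr fun k => ?_
    by_cases hk : k = t ∨ k = a
    · simp [hk, or_comm.mp hk]
    · simp [hk, mt Or.symm hk, mul_add]

/-- Under recurrence the chain started at `i` almost surely returns to `i` or hits `j`. -/
lemma hitAvoid_mass_add_eq_one {S : Type*} (P : S → S → ℝ≥0∞) (hP : IsStochastic P)
    (hrec : IsRecurrent P) {i j : S} (hij : i ≠ j) :
    ∑' n, hitAvoid P i j n i + ∑' n, hitAvoid P j i n i = 1 := by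
  refine le_antisymm (hitAvoid_mass_add_le_one P hP hij i) ?_
  have h1 := hrec i
  have h2 : ∀ n, firstHit P i i n = hitAvoid P i j n i +
      conv (fun k => hitAvoid P j i k i) (fun k => hitAvoid P i i k j) n :=
    fun n => hitAvoid_decomp P hij.symm n i
  simp only [h2] at h1
  rw [ENNReal.tsum_add, tsum_conv] at h1
  rw [← h1]
  gcongr
  exact mul_le_of_le_one_right' (hitAvoid_self_mass_le_one P hP i j)

theorem stmt_13 (S : Type*) [Countable S] (P : S → S → ℝ≥0∞)
    (hP : IsStochastic P) (hirr : IsIrreducible P) (hrec : IsRecurrent P)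
    (i j : S) (hij : i ≠ j) :
    0 < (∑' n : ℕ, hitAvoid P j i n i) ∧
      ((∑' n : ℕ, hitAvoid P j i n i) < 1 →
        ∀ n : ℕ,
          firstHit P i j n =
            ∑' m : ℕ,
              (1 - ∑' k : ℕ, hitAvoid P j i k i) ^ m * (∑' k : ℕ, hitAvoid P j i k i) *
                conv
                  (convPow (fun r : ℕ => hitAvoid P i j r i / ∑' k : ℕ, hitAvoid P i j k i) m)
                  (fun r : ℕ => hitAvoid P j i r i / ∑' k : ℕ, hitAvoid P j i k i) n) ∧
      ((∑' n : ℕ, hitAvoid P j i n i) = 1 →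
        ∀ n : ℕ,
          firstHit P i j n = hitAvoid P j i n i / ∑' k : ℕ, hitAvoid P j i k i) := by
  set V := ∑' n : ℕ, hitAvoid P j i n i with hV
  set U := ∑' n : ℕ, hitAvoid P i j n i with hU
  have hUV : U + V = 1 := hitAvoid_mass_add_eq_one P hP hrec hij
  have hren : ∀ n, firstHit P i j n = ∑' m, PowerSeries.coeff n
      (PowerSeries.mk (fun k => hitAvoid P i j k i) ^ m *
        PowerSeries.mk (fun k => hitAvoid P j i k i)) := by
    intro n
    rw [← renewal_solution _ _ (PowerSeries.mk (fun k => firstHit P i j k))]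
    · simp
    · simp [hitAvoid]
    · ext n
      rw [map_add, ← conv_eq_coeff, PowerSeries.coeff_mk, PowerSeries.coeff_mk]
      exact hitAvoid_decomp P hij n i
  have hVpos : 0 < V := by
    rw [pos_iff_ne_zero]
    intro h0
    have hv : ∀ n, hitAvoid P j i n i = 0 := ENNReal.tsum_eq_zero.mp h0
    obtain ⟨n, hn⟩ := hirr i j
    rw [hren n] at hn
    have hz : PowerSeries.mk (fun k => hitAvoid P j i k i) = 0 := by
      ext k; simp [hv]
    simp [hz] at hn
  have hVtop : V ≠ ∞ := ne_top_of_le_ne_top ENNReal.one_ne_top (hUV ▸ le_add_self)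
  have hUtop : U ≠ ∞ := ne_top_of_le_ne_top ENNReal.one_ne_top (hUV ▸ le_self_add)
  have hU1 : 1 - V = U := by rw [← hUV]; exact ENNReal.add_sub_cancel_right hVtop
  refine ⟨hVpos, ?_, ?_⟩
  · intro hlt n
    have hU0 : U ≠ 0 := by
      intro h; rw [h, zero_add] at hUV; exact hlt.ne hUV
    rw [hren n, hU1]
    refine tsum_congr fun m => ?_
    have hmk : ∀ (p : ℕ → ℝ≥0∞) (c : ℝ≥0∞), c ≠ 0 → c ≠ ∞ →
        PowerSeries.mk p = PowerSeries.C c * PowerSeries.mk (fun r => p r / c) := by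
      intro p c hc hc'
      ext k
      rw [PowerSeries.coeff_C_mul, PowerSeries.coeff_mk, PowerSeries.coeff_mk,
        ENNReal.mul_div_cancel hc hc']
    rw [hmk (fun k => hitAvoid P i j k i) U hU0 hUtop,
      hmk (fun k => hitAvoid P j i k i) V hVpos.ne' hVtop, conv_eq_coeff, mk_convPow,
      mul_pow, mul_mul_mul_comm, ← map_pow, ← map_mul, PowerSeries.coeff_C_mul]
  · intro h1 n
    have hU0 : U = 0 := by rw [← hU1, h1, tsub_self]
    have hu : ∀ n, hitAvoid P i j n i = 0 := ENNReal.tsum_eq_zero.mp hU0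
    rw [h1, div_one]
    have := hitAvoid_decomp P hij n i
    simpa [hu, firstHit] using this

end MCPaper
end

section
/- Let f : ℕ → (0,∞) be non-decreasing with f(n) → ∞, and suppose that for every C > 0 there exist positive integers x, y with f(x + y) > C·f(x)·f(y). Then there exist strictly increasing sequences of positive integers (x_k)_{k≥1} and (y_k)_{k≥1} such that f(x_k + y_k) > k^6·f(x_k)·f(y_k) for all k ≥ 1. -/
/-!
It suffices to find, for all `C` and `N`, a pair `x, y > N` with `f (x + y) > C f(x) f(y)`; the
sequences then follow by recursion. Take a pair `x ≤ y` violating submultiplicativity with a much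
larger constant `C'`. They cannot both be bounded in terms of `N`, since `f (x + y)` would be too
small. If `x > N`, nothing is left to do. If `x ≤ N`, then `y` is large, and the pair
`(x + N + 1, y - (N + 1))` has the same sum: `f (y - (N + 1)) ≤ f y` by monotonicity, while
`f (x + N + 1) ≤ f (2N + 1)` costs only a constant factor, absorbed in `C'`.
-/
open Filter
open scoped ENNReal

namespace MCPaper

lemma exists_large_pair (f : ℕ → ℝ) (hpos : ∀ n, 0 < f n) (hmono : Monotone f)
    (hC : ∀ C : ℝ, 0 < C → ∃ x y : ℕ, 0 < x ∧ 0 < y ∧ C * f x * f y < f (x + y))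
    (C : ℝ) (h0C : 0 < C) (N : ℕ) :
    ∃ x y : ℕ, N < x ∧ N < y ∧ C * f x * f y < f (x + y) := by
  have h0 := hpos 0
  -- The three summands serve, in order: both entries large, the shift, both entries bounded.
  obtain ⟨x, y, hxy, h⟩ : ∃ x y : ℕ, x ≤ y ∧
      (C + C * f (2 * N + 1) / f 0 + f (4 * N + 2) / (f 0 * f 0)) * f x * f y < f (x + y) := by
    have h1 := hpos (2 * N + 1)
    have h2 := hpos (4 * N + 2)
    obtain ⟨x, y, -, -, h⟩ :=
      hC (C + C * f (2 * N + 1) / f 0 + f (4 * N + 2) / (f 0 * f 0)) (by positivity)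
    rcases le_total x y with hxy | hxy
    · exact ⟨x, y, hxy, h⟩
    · refine ⟨y, x, hxy, ?_⟩
      rwa [mul_right_comm, add_comm y x]
  have hx := hpos x
  have hy := hpos y
  have hA : 0 < C * f (2 * N + 1) / f 0 := by have := hpos (2 * N + 1); positivity
  have hB : 0 < f (4 * N + 2) / (f 0 * f 0) := by have := hpos (4 * N + 2); positivity
  have hP : 0 < f x * f y := mul_pos hx hy
  rw [mul_assoc, add_mul, add_mul] at h
  have hCP := mul_pos h0C hP
  have hAP := mul_pos hA hP
  have hBP := mul_pos hB hP
  rcases lt_or_ge N x with hN | hN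
  · exact ⟨x, y, hN, lt_of_lt_of_le hN hxy, by rw [mul_assoc]; linarith⟩
  have h0x : f 0 ≤ f x := hmono (Nat.zero_le _)
  have h0y : f 0 ≤ f y := hmono (Nat.zero_le _)
  rcases lt_or_ge (2 * N + 1) y with hM | hM
  · refine ⟨x + (N + 1), y - (N + 1), by omega, by omega, ?_⟩
    rw [show x + (N + 1) + (y - (N + 1)) = x + y by omega]
    have e1 : f (x + (N + 1)) ≤ f (2 * N + 1) := hmono (by omega)
    have e2 : f (y - (N + 1)) ≤ f y := hmono (by omega)
    have e3 : C * f (x + (N + 1)) * f (y - (N + 1)) ≤ C * f (2 * N + 1) * f y := by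
      have := hpos (y - (N + 1))
      have := hpos (2 * N + 1)
      gcongr
    have e4 : C * f (2 * N + 1) * f y ≤ C * f (2 * N + 1) / f 0 * (f x * f y) := by
      calc C * f (2 * N + 1) * f y = C * f (2 * N + 1) / f 0 * (f 0 * f y) := by field_simp
        _ ≤ _ := by gcongr
    linarith
  · exfalso
    have e1 : f (x + y) ≤ f (4 * N + 2) := hmono (by omega)
    have e2 : f (4 * N + 2) ≤ f (4 * N + 2) / (f 0 * f 0) * (f x * f y) := by
      calc f (4 * N + 2) = f (4 * N + 2) / (f 0 * f 0) * (f 0 * f 0) := by field_simp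
        _ ≤ _ := by gcongr
    linarith

theorem stmt_15 (f : ℕ → ℝ) (hpos : ∀ n, 0 < f n) (hmono : Monotone f)
    (htop : Tendsto f atTop atTop)
    (hC : ∀ C : ℝ, 0 < C → ∃ x y : ℕ, 0 < x ∧ 0 < y ∧ C * f x * f y < f (x + y)) :
    ∃ x y : ℕ → ℕ, StrictMono x ∧ StrictMono y ∧ (∀ k, 0 < x k) ∧ (∀ k, 0 < y k) ∧
      ∀ k : ℕ, ((k : ℝ) + 1) ^ 6 * f (x k) * f (y k) < f (x k + y k) := by
  have key : ∀ k N : ℕ, ∃ x y : ℕ, N < x ∧ N < y ∧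
      ((k : ℝ) + 1) ^ 6 * f x * f y < f (x + y) := fun k N =>
    exists_large_pair f hpos hmono hC _ (by positivity) N
  choose a b ha hb hab using key
  -- `T k` is the lower bound imposed on the `k`-th pair; it dominates all earlier entries.
  let T : ℕ → ℕ := fun k => Nat.rec 0 (fun k t => max (a k t) (b k t)) k
  have hT : ∀ k, T (k + 1) = max (a k (T k)) (b k (T k)) := fun _ => rfl
  refine ⟨fun k => a k (T k), fun k => b k (T k), strictMono_nat_of_lt_succ fun k => ?_,
    strictMono_nat_of_lt_succ fun k => ?_, fun k => (Nat.zero_le _).trans_lt (ha _ _),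
    fun k => (Nat.zero_le _).trans_lt (hb _ _), fun k => hab _ _⟩
  · exact ((le_max_left _ _).trans (hT k).ge).trans_lt (ha _ _)
  · exact ((le_max_right _ _).trans (hT k).ge).trans_lt (hb _ _)

end MCPaper
end

section
/- Let f : ℕ → (0,∞) be non-decreasing with f(n) → ∞, and suppose that for every C > 0 there exist positive integers x, y with f(x + y) > C·f(x)·f(y). Then there exist independent random variables U_1 and U_2 taking values in the positive integers, each with infinite support, such that E f(U_1) < ∞ and E f(U_2) < ∞ but E f(U_1 + U_2) = ∞. -/
/-!
Choose `(x k, y k)` with `f (x k + y k) > 8 ^ k * f (x k) * f (y k)`. By `exists_law` there are laws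
`u₁`, `u₂` with finite `f`-moment whose masses at `x k` and `y k` are at least constant multiples of
`2⁻ᵏ / f (x k)` and `2⁻ᵏ / f (y k)`. The pair `(x k, y k)` alone then contributes at least a constant
times `2 ^ k` to `E f(U₁ + U₂)`. As this holds for every `k`, that expectation is infinite; it does
not matter whether the pairs are distinct, because they are used one at a time.
-/

open Filter
open scoped ENNReal

namespace MCPaper

/-- For any sequence `x` of positive integers there is a law `u` on the positive integers, with
infinite support and finite `f`-moment, charging each `x k` with at least `c * 2⁻ᵏ / f (x k)`, where
`c ≠ 0` does not depend on `k`. -/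
lemma exists_law (f : ℕ → ℝ) (hpos : ∀ n, 0 < f n) (hmono : Monotone f)
    (x : ℕ → ℕ) (hx : ∀ k, 0 < x k) :
    ∃ (u : ℕ → ℝ≥0∞) (c : ℝ≥0∞), c ≠ 0 ∧ u 0 = 0 ∧ (∑' n : ℕ, u n = 1) ∧
      {n : ℕ | u n ≠ 0}.Infinite ∧ (∑' n : ℕ, ENNReal.ofReal (f n) * u n < ⊤) ∧
      ∀ k, c * (2⁻¹ ^ k * (ENNReal.ofReal (f (x k)))⁻¹) ≤ u (x k) := by
  have hF0 : ∀ n, ENNReal.ofReal (f n) ≠ 0 := fun n => by simpa using hpos n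
  have hFt : ∀ n, ENNReal.ofReal (f n) ≠ ⊤ := fun n => ENNReal.ofReal_ne_top
  -- `g n` will be, up to normalisation, `f n * u n`: the first summand makes the support infinite,
  -- the second one charges the points `x k`.
  set g : ℕ → ℝ≥0∞ := fun n =>
    if n = 0 then 0 else 2⁻¹ ^ n + ∑' k : ℕ, if x k = n then 2⁻¹ ^ k else 0 with hg
  have hgeom : ∑' n : ℕ, (2⁻¹ : ℝ≥0∞) ^ n = 2 := by
    rw [ENNReal.tsum_geometric, ENNReal.one_sub_inv_two, inv_inv]
  have hgsum : ∑' n, g n ≠ ⊤ := by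
    have h1 : ∑' n, g n ≤ 2 + 2 := by
      calc ∑' n, g n
          ≤ ∑' n, ((2⁻¹ : ℝ≥0∞) ^ n + ∑' k : ℕ, if x k = n then (2⁻¹ : ℝ≥0∞) ^ k else 0) := by
            refine ENNReal.tsum_le_tsum fun n => ?_
            simp only [hg]
            split_ifs <;> simp
        _ = 2 + 2 := by
            rw [ENNReal.tsum_add, ENNReal.tsum_comm, hgeom]
            simp only [tsum_ite_eq', hgeom]
    exact ne_top_of_le_ne_top (by norm_num) h1
  have hgpos : ∀ n, n ≠ 0 → g n ≠ 0 := by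
    intro n hn
    simp [hg, hn]
  have hgx : ∀ k, 2⁻¹ ^ k ≤ g (x k) := by
    intro k
    have h2 : (2⁻¹ : ℝ≥0∞) ^ k ≤ ∑' j : ℕ, if x j = x k then (2⁻¹ : ℝ≥0∞) ^ j else 0 := by
      simpa using ENNReal.le_tsum (f := fun j => if x j = x k then (2⁻¹ : ℝ≥0∞) ^ j else 0) k
    simp only [hg, (hx k).ne', if_false]
    exact h2.trans le_add_self
  set v : ℕ → ℝ≥0∞ := fun n => (ENNReal.ofReal (f n))⁻¹ * g n with hv
  have hvpos : ∀ n, n ≠ 0 → v n ≠ 0 := fun n hn =>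
    mul_ne_zero (ENNReal.inv_ne_zero.2 (hFt n)) (hgpos n hn)
  have hV0 : ∑' n, v n ≠ 0 := fun h => hvpos 1 one_ne_zero (ENNReal.tsum_eq_zero.1 h 1)
  -- The total mass is finite because `f` is bounded below by `f 0 > 0`.
  have hVt : ∑' n, v n ≠ ⊤ := by
    have h1 : ∑' n, v n ≤ (ENNReal.ofReal (f 0))⁻¹ * ∑' n, g n := by
      rw [← ENNReal.tsum_mul_left]
      refine ENNReal.tsum_le_tsum fun n => ?_
      simp only [hv]
      gcongr
      exact hmono (Nat.zero_le n)
    exact ne_top_of_le_ne_top (ENNReal.mul_ne_top (ENNReal.inv_ne_top.2 (hF0 0)) hgsum) h1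
  refine ⟨fun n => (∑' n, v n)⁻¹ * v n, (∑' n, v n)⁻¹, ENNReal.inv_ne_zero.2 hVt, ?_, ?_, ?_, ?_, ?_⟩
  · simp [hv, hg]
  · rw [ENNReal.tsum_mul_left, ENNReal.inv_mul_cancel hV0 hVt]
  · refine (Set.Ioi_infinite 0).mono fun n hn => ?_
    exact mul_ne_zero (ENNReal.inv_ne_zero.2 hVt) (hvpos n (Nat.pos_iff_ne_zero.1 hn))
  · have h1 : ∀ n, ENNReal.ofReal (f n) * ((∑' n, v n)⁻¹ * v n) = (∑' n, v n)⁻¹ * g n := by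
      intro n
      rw [mul_left_comm]
      congr 1
      simp only [hv]
      rw [← mul_assoc, ENNReal.mul_inv_cancel (hF0 n) (hFt n), one_mul]
    simp only [h1]
    rw [ENNReal.tsum_mul_left]
    exact (ENNReal.mul_ne_top (ENNReal.inv_ne_top.2 hV0) hgsum).lt_top
  · intro k
    simp only [hv]
    rw [mul_comm (2⁻¹ ^ k)]
    gcongr
    exact hgx k

theorem stmt_16 (f : ℕ → ℝ) (hpos : ∀ n, 0 < f n) (hmono : Monotone f)
    (htop : Tendsto f atTop atTop)
    (hC : ∀ C : ℝ, 0 < C → ∃ x y : ℕ, 0 < x ∧ 0 < y ∧ C * f x * f y < f (x + y)) :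
    ∃ u₁ u₂ : ℕ → ℝ≥0∞,
      u₁ 0 = 0 ∧ u₂ 0 = 0 ∧ (∑' n : ℕ, u₁ n = 1) ∧ (∑' n : ℕ, u₂ n = 1) ∧
        {n : ℕ | u₁ n ≠ 0}.Infinite ∧ {n : ℕ | u₂ n ≠ 0}.Infinite ∧
        (∑' n : ℕ, ENNReal.ofReal (f n) * u₁ n < ⊤) ∧
        (∑' n : ℕ, ENNReal.ofReal (f n) * u₂ n < ⊤) ∧
        (∑' n : ℕ, ENNReal.ofReal (f n) * conv u₁ u₂ n = ⊤) := by
  choose x y hx hy hxy using fun k : ℕ => hC (8 ^ k) (by positivity)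
  obtain ⟨u₁, c₁, hc₁, h10, h11, h1i, h1f, h1⟩ := exists_law f hpos hmono x hx
  obtain ⟨u₂, c₂, hc₂, h20, h21, h2i, h2f, h2⟩ := exists_law f hpos hmono y hy
  refine ⟨u₁, u₂, h10, h20, h11, h21, h1i, h2i, h1f, h2f, ?_⟩
  set S := ∑' n : ℕ, ENNReal.ofReal (f n) * conv u₁ u₂ n
  have hS : ∀ k : ℕ, c₁ * c₂ * 2 ^ k ≤ S := by
    intro k
    have hconv : u₁ (x k) * u₂ (y k) ≤ conv u₁ u₂ (x k + y k) := by
      have := Finset.single_le_sum (f := fun j => u₁ j * u₂ (x k + y k - j))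
        (s := Finset.range (x k + y k + 1)) (fun _ _ => zero_le)
        (Finset.mem_range.2 (by omega : x k < x k + y k + 1))
      simpa [conv] using this
    have hf : 8 ^ k * ENNReal.ofReal (f (x k)) * ENNReal.ofReal (f (y k))
        ≤ ENNReal.ofReal (f (x k + y k)) := by
      have := ENNReal.ofReal_le_ofReal (hxy k).le
      rwa [ENNReal.ofReal_mul (by have := hpos (x k); positivity),
        ENNReal.ofReal_mul (by positivity), ENNReal.ofReal_pow (by norm_num),
        ENNReal.ofReal_ofNat] at this
    have hpow : (8 : ℝ≥0∞) ^ k * (2⁻¹ ^ k * 2⁻¹ ^ k) = 2 ^ k := by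
      rw [← mul_pow, ← mul_pow]
      congr 1
      rw [show (8 : ℝ≥0∞) = 2 * (2 * 2) by norm_num, mul_assoc, mul_mul_mul_comm,
        ENNReal.mul_inv_cancel two_ne_zero ENNReal.ofNat_ne_top, one_mul, mul_one]
    have hcx := ENNReal.mul_inv_cancel (a := ENNReal.ofReal (f (x k)))
      (by simpa using hpos (x k)) ENNReal.ofReal_ne_top
    have hcy := ENNReal.mul_inv_cancel (a := ENNReal.ofReal (f (y k)))
      (by simpa using hpos (y k)) ENNReal.ofReal_ne_top
    calc c₁ * c₂ * 2 ^ k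
        = c₁ * c₂ * (8 ^ k * (2⁻¹ ^ k * 2⁻¹ ^ k))
            * (ENNReal.ofReal (f (x k)) * (ENNReal.ofReal (f (x k)))⁻¹)
            * (ENNReal.ofReal (f (y k)) * (ENNReal.ofReal (f (y k)))⁻¹) := by
          rw [hcx, hcy, hpow, mul_one, mul_one]
      _ = 8 ^ k * ENNReal.ofReal (f (x k)) * ENNReal.ofReal (f (y k)) *
            ((c₁ * (2⁻¹ ^ k * (ENNReal.ofReal (f (x k)))⁻¹)) *
              (c₂ * (2⁻¹ ^ k * (ENNReal.ofReal (f (y k)))⁻¹))) := by ring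
      _ ≤ ENNReal.ofReal (f (x k + y k)) * (u₁ (x k) * u₂ (y k)) :=
          mul_le_mul' hf (mul_le_mul' (h1 k) (h2 k))
      _ ≤ ENNReal.ofReal (f (x k + y k)) * conv u₁ u₂ (x k + y k) := by gcongr
      _ ≤ S := ENNReal.le_tsum (f := fun n => ENNReal.ofReal (f n) * conv u₁ u₂ n) _
  have hlim : Tendsto (fun k : ℕ => c₁ * c₂ * (2 : ℝ≥0∞) ^ k) atTop (nhds ⊤) := by
    have h := ENNReal.Tendsto.const_mul (a := c₁ * c₂)
      (ENNReal.tendsto_pow_atTop_nhds_top_iff.2 (by norm_num : (1 : ℝ≥0∞) < 2))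
      (Or.inl ENNReal.top_ne_zero)
    rwa [ENNReal.mul_top (mul_ne_zero hc₁ hc₂)] at h
  exact top_le_iff.1 (le_of_tendsto' hlim hS)

end MCPaper
end

section
/- Let f : ℕ → (0,∞) be non-decreasing with f(n) → ∞, and suppose limsup_{n→∞} (1/n)·log f(n) > 0. Then f does not belong to the class G: there exists p ∈ (0,1) such that for the irreducible recurrent Markov chain on the two states {0, 1} with transition probabilities p_{01} = p, p_{00} = 1 - p, p_{10} = 1, one has E f(T_00) < ∞ while E f(T_11) = ∞. -/
/-!
The return time of `0` in the two-state chain is at most `2`, so `E f(T_00)` is always finite,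
whereas `P(T_11 = n + 2) = (1 - p) ^ n * p` is geometric. A positive limsup of `log f(n) / n`
provides `c > 0` with `f n > exp (c n)` for infinitely many `n`
(`exists_frequently_exp_lt`). For `1 - p = exp (-c)` infinitely many terms of the series
`E f(T_11)` are then at least `p`, so the series diverges (`momGen_twoState_one_eq_top`).
The same chain is the witness that `f` is not in `𝒢`.
-/

open Filter
open scoped ENNReal

namespace MCPaper

variable {E : Type*}

/-- the class `𝒢`: a finite generalized `f`-moment of the return time of one state implies
finiteness for the return times of all states, for every irreducible recurrent chain. -/
def MemG (f : ℕ → ℝ) : Prop :=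
  ∀ (S : Type) [Countable S] (P : S → S → ℝ≥0∞),
    IsStochastic P → IsIrreducible P → IsRecurrent P →
      ∀ i : S, momGen f P i i < ⊤ → ∀ j : S, momGen f P j j < ⊤

/-- the class `ℋ`: finiteness of `E f(T_ij)` and `E f(T_ji)` for a pair of states implies
finiteness of `E f(T_kl)` for all pairs, for every irreducible recurrent chain. -/
def MemH (f : ℕ → ℝ) : Prop :=
  ∀ (S : Type) [Countable S] (P : S → S → ℝ≥0∞),
    IsStochastic P → IsIrreducible P → IsRecurrent P →
      ∀ i j : S, momGen f P i j < ⊤ → momGen f P j i < ⊤ →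
        ∀ k l : S, momGen f P k l < ⊤

/-- The transition matrix of the two-state chain that moves from `0` to `1` with probability `q`,
stays at `0` with probability `1 - q`, and always returns from `1` to `0`. -/
noncomputable def twoState (q : ℝ≥0∞) : Fin 2 → Fin 2 → ℝ≥0∞ := fun a b =>
  if a = 0 then (if b = 0 then 1 - q else q) else (if b = 0 then 1 else 0)

lemma twoState_hit_one_from_zero (q : ℝ≥0∞) (n : ℕ) :
    hitAvoid (twoState q) 1 1 (n + 1) 0 = (1 - q) ^ n * q := by
  induction n with
  | zero => simp [hitAvoid, twoState]
  | succ n ih =>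
    rw [hitAvoid, tsum_fintype, Fin.sum_univ_two, ih]
    simp [twoState, pow_succ']
    ring

lemma twoState_return_one (q : ℝ≥0∞) (n : ℕ) :
    firstHit (twoState q) 1 1 (n + 2) = (1 - q) ^ n * q := by
  rw [firstHit, hitAvoid, tsum_fintype, Fin.sum_univ_two, twoState_hit_one_from_zero]
  simp [twoState]

lemma twoState_return_one_one (q : ℝ≥0∞) : firstHit (twoState q) 1 1 1 = 0 := by
  simp [firstHit, hitAvoid, twoState]

lemma twoState_return_zero_one (q : ℝ≥0∞) : firstHit (twoState q) 0 0 1 = 1 - q := by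
  simp [firstHit, hitAvoid, twoState]

lemma twoState_return_zero_two (q : ℝ≥0∞) : firstHit (twoState q) 0 0 2 = q := by
  simp [firstHit, hitAvoid, twoState, tsum_fintype]

lemma twoState_return_zero_large (q : ℝ≥0∞) (n : ℕ) :
    firstHit (twoState q) 0 0 (n + 3) = 0 := by
  simp [firstHit, hitAvoid, twoState, tsum_fintype]

lemma firstHit_zero (P : E → E → ℝ≥0∞) (i j : E) : firstHit P i j 0 = 0 := rfl

/-- The return time of `0` is at most `2`, so its generalized moments have two terms. -/
lemma momGen_twoState_zero (g : ℕ → ℝ≥0∞) (q : ℝ≥0∞) :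
    ∑' n, g n * firstHit (twoState q) 0 0 n = g 1 * (1 - q) + g 2 * q := by
  rw [tsum_eq_sum (s := Finset.range 3)]
  · simp [Finset.sum_range_succ, firstHit_zero, twoState_return_zero_one,
      twoState_return_zero_two]
  · intro n hn
    obtain ⟨m, rfl⟩ := Nat.exists_eq_add_of_le' (not_lt.mp (mt Finset.mem_range.mpr hn))
    rw [twoState_return_zero_large, mul_zero]

lemma twoState_stochastic {q : ℝ≥0∞} (h1 : q ≤ 1) : IsStochastic (twoState q) := by
  intro i
  rw [tsum_fintype, Fin.sum_univ_two]
  fin_cases i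
  · simpa [twoState] using tsub_add_cancel_of_le h1
  · simp [twoState]

lemma twoState_irreducible {q : ℝ≥0∞} (h0 : 0 < q) (h1 : q < 1) :
    IsIrreducible (twoState q) := by
  intro i j
  fin_cases i <;> fin_cases j
  · exact ⟨1, by simpa [firstHit, hitAvoid, twoState] using h1⟩
  · exact ⟨1, by simpa [firstHit, hitAvoid, twoState] using h0⟩
  · exact ⟨1, by simp [firstHit, hitAvoid, twoState]⟩
  · refine ⟨2, ?_⟩
    have := twoState_return_one q 0
    simp only [pow_zero, one_mul, zero_add] at this
    simpa [this] using h0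

lemma twoState_recurrent {q : ℝ≥0∞} (h0 : 0 < q) (h1 : q < 1) :
    IsRecurrent (twoState q) := by
  intro i
  fin_cases i
  · have := momGen_twoState_zero (fun _ => 1) q
    simpa [tsub_add_cancel_of_le h1.le] using this
  · change ∑' n, firstHit (twoState q) 1 1 n = 1
    rw [← ENNReal.summable.sum_add_tsum_nat_add' (k := 2)]
    simp only [twoState_return_one, ENNReal.tsum_mul_right, ENNReal.tsum_geometric]
    rw [ENNReal.sub_sub_cancel ENNReal.one_ne_top h1.le,
      ENNReal.inv_mul_cancel h0.ne' h1.ne_top]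
    simp [Finset.sum_range_succ, firstHit_zero, twoState_return_one_one]

/-- If `f n > exp (c n)` infinitely often and the probability of staying at `0` is `exp (-c)`,
then infinitely many terms of `E f(T_11)` are at least `q`, so the moment diverges. -/
lemma momGen_twoState_one_eq_top {f : ℕ → ℝ} {c : ℝ} (hc : 0 < c)
    (hf : ∃ᶠ n : ℕ in atTop, Real.exp (c * n) < f n) :
    momGen f (twoState (ENNReal.ofReal (1 - Real.exp (-c)))) 1 1 = ⊤ := by
  set q := ENNReal.ofReal (1 - Real.exp (-c)) with hq
  have hlt : Real.exp (-c) < 1 := Real.exp_lt_one_iff.mpr (by linarith)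
  have hq0 : q ≠ 0 := by
    rw [hq]; exact (ENNReal.ofReal_pos.mpr (by linarith)).ne'
  have hsub : 1 - q = ENNReal.ofReal (Real.exp (-c)) := by
    rw [hq, ← ENNReal.ofReal_one, ← ENNReal.ofReal_sub _ (by linarith)]
    congr 1; ring
  by_contra hne
  have hlim := ENNReal.tendsto_atTop_zero_of_tsum_ne_top hne
  have hev : ∀ᶠ n in atTop, ENNReal.ofReal (f n) * firstHit (twoState q) 1 1 n < q :=
    hlim.eventually_lt_const (pos_iff_ne_zero.mpr hq0)
  obtain ⟨n, hfn, hn, h2⟩ := (hf.and_eventually (hev.and (eventually_ge_atTop 2))).exists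
  obtain ⟨m, rfl⟩ := Nat.exists_eq_add_of_le' h2
  refine absurd hn (not_lt.mpr ?_)
  rw [twoState_return_one, ← mul_assoc, hsub, ← ENNReal.ofReal_pow (Real.exp_pos _).le,
    ← ENNReal.ofReal_mul' (by positivity)]
  refine le_mul_of_one_le_left zero_le (ENNReal.one_le_ofReal.mpr ?_)
  calc (1 : ℝ) ≤ Real.exp (c * (m + 2 : ℕ)) * Real.exp (-c) ^ m := by
        rw [← Real.exp_nat_mul, ← Real.exp_add]
        apply Real.one_le_exp
        push_cast
        nlinarith
    _ ≤ _ := by gcongr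

lemma exists_frequently_exp_lt {f : ℕ → ℝ} (hpos : ∀ n, 0 < f n)
    (hlog : 0 < limsup (fun n : ℕ => ((Real.log (f n) / n : ℝ) : EReal)) atTop) :
    ∃ c : ℝ, 0 < c ∧ ∃ᶠ n : ℕ in atTop, Real.exp (c * n) < f n := by
  obtain ⟨c, hc0, hc⟩ := EReal.lt_iff_exists_real_btwn.mp hlog
  refine ⟨c, by exact_mod_cast hc0, ?_⟩
  refine ((frequently_lt_of_lt_limsup (by isBoundedDefault) hc).and_eventually
    (eventually_gt_atTop 0)).mono ?_
  rintro n ⟨hn, hn0⟩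
  have h : c < Real.log (f n) / n := by exact_mod_cast hn
  rw [lt_div_iff₀ (by exact_mod_cast hn0)] at h
  exact (Real.lt_log_iff_exp_lt (hpos n)).mp h

theorem stmt_18 (f : ℕ → ℝ) (hpos : ∀ n, 0 < f n) (hmono : Monotone f)
    (htop : Tendsto f atTop atTop)
    (hlog : 0 < limsup (fun n : ℕ => ((Real.log (f n) / n : ℝ) : EReal)) atTop) :
    ¬ MemG f ∧
      ∃ p : ℝ, 0 < p ∧ p < 1 ∧
        IsStochastic (fun a b : Fin 2 =>
        if a = 0 then (if b = 0 then 1 - ENNReal.ofReal p else ENNReal.ofReal p)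
        else (if b = 0 then 1 else 0)) ∧
        IsIrreducible (fun a b : Fin 2 =>
        if a = 0 then (if b = 0 then 1 - ENNReal.ofReal p else ENNReal.ofReal p)
        else (if b = 0 then 1 else 0)) ∧
        IsRecurrent (fun a b : Fin 2 =>
        if a = 0 then (if b = 0 then 1 - ENNReal.ofReal p else ENNReal.ofReal p)
        else (if b = 0 then 1 else 0)) ∧
        momGen f (fun a b : Fin 2 =>
        if a = 0 then (if b = 0 then 1 - ENNReal.ofReal p else ENNReal.ofReal p)
        else (if b = 0 then 1 else 0)) 0 0 < ⊤ ∧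
        momGen f (fun a b : Fin 2 =>
        if a = 0 then (if b = 0 then 1 - ENNReal.ofReal p else ENNReal.ofReal p)
        else (if b = 0 then 1 else 0)) 1 1 = ⊤ := by
  obtain ⟨c, hc, hf⟩ := exists_frequently_exp_lt hpos hlog
  have hlt : Real.exp (-c) < 1 := Real.exp_lt_one_iff.mpr (by linarith)
  have hexp := Real.exp_pos (-c)
  have h0 : 0 < ENNReal.ofReal (1 - Real.exp (-c)) := ENNReal.ofReal_pos.mpr (by linarith)
  have h1 : ENNReal.ofReal (1 - Real.exp (-c)) < 1 := ENNReal.ofReal_lt_one.mpr (by linarith)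
  have hsto := twoState_stochastic h1.le
  have hirr := twoState_irreducible h0 h1
  have hrec := twoState_recurrent h0 h1
  have hinf := momGen_twoState_one_eq_top hc hf
  have hfin : momGen f (twoState (ENNReal.ofReal (1 - Real.exp (-c)))) 0 0 < ⊤ := by
    rw [momGen, momGen_twoState_zero]
    finiteness
  refine ⟨fun hG => ?_, 1 - Real.exp (-c), by linarith, by linarith,
    hsto, hirr, hrec, hfin, hinf⟩
  exact (hG (Fin 2) _ hsto hirr hrec 0 hfin 1).ne hinf

end MCPaper
end
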